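/- (Claim 6: direct part of Theorem 8, common-message BC, with exponentially decaying errors and deterministic encoders.) Let W(y,z|x) be a two-receiver BC, let P be a PMF on 𝒳, and let rates R, R_𝒴, R_𝒵 satisfy 0 < R < min{I(P,W_𝒴), I(P,W_𝒵)}, 0 < R_𝒴 < I(P, W_𝒴), and 0 < R_𝒵 < I(P, W_𝒵). Then there exist τ > 0 and n₀ ∈ ℕ such that for every n ≥ n₀ there exists an (n, ℳ, ℳ_𝒴, ℳ_𝒵, e^{−nτ}, e^{−nτ}, e^{−nτ}, e^{−nτ}) average-error ID code for the BC with a common message satisfying (1/n)·log log |ℳ| ≥ R, (1/n)·log log |ℳ_𝒴| ≥ R_𝒴, and (1/n)·log log |ℳ_𝒵| ≥ R_𝒵, in which every encoding PMF Q_{m,m_𝒴,m_𝒵} is a point mass on a single sequence in 𝒳ⁿ. -/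

import Mathlib

open scoped Classical
open Finset

noncomputable section

/-- `P` is a probability mass function on the finite type `X`. -/
def IsPMF {X : Type*} [Fintype X] (P : X → ℝ) : Prop :=
  (∀ x, 0 ≤ P x) ∧ ∑ x, P x = 1

/-- `W` is a (discrete memoryless) channel from `X` to `Y`. -/
def IsChannel {X Y : Type*} [Fintype Y] (W : X → Y → ℝ) : Prop :=
  (∀ x y, 0 ≤ W x y) ∧ ∀ x, ∑ y, W x y = 1

/-- The `n`-fold memoryless extension `W^n(𝐲|𝐱) = ∏ᵢ W(yᵢ|xᵢ)`. -/
def Wn {X Y : Type*} (W : X → Y → ℝ) (n : ℕ) (x : Fin n → X) (y : Fin n → Y) : ℝ :=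
  ∏ i, W (x i) (y i)

/-- Mutual information `I(P,W)` (natural logarithm), with the convention that
terms with `P x * W x y = 0` contribute `0`. -/
def mutInf {X Y : Type*} [Fintype X] [Fintype Y] (P : X → ℝ) (W : X → Y → ℝ) : ℝ :=
  ∑ x, ∑ y, if P x * W x y = 0 then 0
    else P x * W x y * Real.log (W x y / ∑ x', P x' * W x' y)

/-- The error requirements of an `(n, M, l1, l2)` ID code for the DMC `W`:
maximum probability of missed identification at most `l1`, maximum probability
of wrong identification at most `l2`. -/
def IDCodeErr {X Y M : Type*} [Fintype X] [Fintype Y]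
    (n : ℕ) (W : X → Y → ℝ) (Q : M → (Fin n → X) → ℝ)
    (D : M → Finset (Fin n → Y)) (l1 l2 : ℝ) : Prop :=
  (∀ m, ∑ x, Q m x * ∑ y ∈ (D m)ᶜ, Wn W n x y ≤ l1) ∧
  (∀ m m', m ≠ m' → ∑ x, Q m x * ∑ y ∈ D m', Wn W n x y ≤ l2)

/-- `(n, M, l1, l2)` ID code for the DMC `W`. -/
def IsIDCode {X Y M : Type*} [Fintype X] [Fintype Y]
    (n : ℕ) (W : X → Y → ℝ) (Q : M → (Fin n → X) → ℝ)
    (D : M → Finset (Fin n → Y)) (l1 l2 : ℝ) : Prop :=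
  (∀ m, IsPMF (Q m)) ∧ IDCodeErr n W Q D l1 l2

/-- `W` is a two-receiver broadcast channel from `X` to `Y × Z`. -/
def IsBC {X Y Z : Type*} [Fintype Y] [Fintype Z] (W : X → Y → Z → ℝ) : Prop :=
  (∀ x y z, 0 ≤ W x y z) ∧ ∀ x, ∑ y, ∑ z, W x y z = 1

/-- Marginal channel to terminal `Y`. -/
def margY {X Y Z : Type*} [Fintype Z] (W : X → Y → Z → ℝ) : X → Y → ℝ :=
  fun x y => ∑ z, W x y z

/-- Marginal channel to terminal `Z`. -/
def margZ {X Y Z : Type*} [Fintype Y] (W : X → Y → Z → ℝ) : X → Z → ℝ :=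
  fun x z => ∑ y, W x y z

/-- Average-error ID code for the BC with a common message: each receiver
identifies the pair (common message, its private message) jointly; the mixture
codes, averaged over the other receiver's private message and indexed by the
corresponding pairs, are ID codes for the marginal channels. -/
def IsCMIDCode {X Y Z : Type*} [Fintype X] [Fintype Y] [Fintype Z]
    (n k kY kZ : ℕ) (W : X → Y → Z → ℝ)
    (Q : Fin k → Fin kY → Fin kZ → (Fin n → X) → ℝ)
    (DY : Fin k → Fin kY → Finset (Fin n → Y))
    (DZ : Fin k → Fin kZ → Finset (Fin n → Z))
    (l1Y l2Y l1Z l2Z : ℝ) : Prop :=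
  (∀ m my mz, IsPMF (Q m my mz)) ∧
  IDCodeErr n (margY W)
    (fun p : Fin k × Fin kY => fun x => (kZ : ℝ)⁻¹ * ∑ mz, Q p.1 p.2 mz x)
    (fun p : Fin k × Fin kY => DY p.1 p.2) l1Y l2Y ∧
  IDCodeErr n (margZ W)
    (fun p : Fin k × Fin kZ => fun x => (kY : ℝ)⁻¹ * ∑ my, Q p.1 my p.2 x)
    (fun p : Fin k × Fin kZ => DZ p.1 p.2) l1Z l2Z

/-!
Draw a pool of independent `P`-distributed codewords `c(s, t, b, b')`, where `s, t, b, b'` range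
over exponentially large sets, and choose block codes `F, G` with doubly exponentially many words,
any two of which agree in few positions. A private message for `Y` is a pair `(a, s)`, one for `Z`
a pair `(a', t)`, and the triple with common message `m` is sent as the single codeword
`c(s, t, F_{m,a}(t), G_{m,a'}(s))`.

For the receiver `Y`, averaging over `(a', t)` turns the message `(m, a, s)` into a mixture, over
the values `w` of `G_{m,a'}(s)`, of the uniform distributions on the lines
`t ↦ c(s, t, F_{m,a}(t), w)` of the pool. It therefore suffices that for each fixed `w` these lines
identify `(m, a, s)`. The receiver accepts if its output is typical for some codeword
`c(s, t, F_{m,a}(t), w)` with arbitrary `t` and `w`; there are fewer than `exp (n I(P, W_Y))` of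
them. A line meets the codewords behind the decoder of another message only where two words of `F`
agree, which is rare, and outside this overlap its codewords are independent of that decoder. So
both error probabilities are averages of conditionally independent variables with exponentially
small mean. A Chernoff bound makes each bad event doubly exponentially unlikely, which pays for a
union bound over the doubly exponentially many pairs of messages. The roles of the receivers are
symmetric, hence one pool works for both.

Typicality is a threshold on the information density, whose exponential moment at a small negative
parameter is below `1` after centring at a rate less than its mean `I(P, W)`.
-/

section Channels

variable {Ω Υ : Type*} [Fintype Υ] {V : Ω → Υ → ℝ}

lemma IsChannel.sum_nonneg (hV : IsChannel V) (x : Ω) (s : Finset Υ) : 0 ≤ ∑ y ∈ s, V x y :=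
  Finset.sum_nonneg fun y _ => hV.1 x y

lemma IsChannel.sum_le_one (hV : IsChannel V) (x : Ω) (s : Finset Υ) : ∑ y ∈ s, V x y ≤ 1 :=
  (sum_le_sum_of_subset_of_nonneg (subset_univ s) fun y _ _ => hV.1 x y).trans_eq (hV.2 x)

lemma IsChannel.sum_mono (hV : IsChannel V) (x : Ω) {s t : Finset Υ} (h : s ⊆ t) :
    ∑ y ∈ s, V x y ≤ ∑ y ∈ t, V x y :=
  sum_le_sum_of_subset_of_nonneg h fun y _ _ => hV.1 x y

lemma IsChannel.sum_biUnion_le [DecidableEq Υ] {κ : Type*} (hV : IsChannel V) (x : Ω)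
    (s : Finset κ) (D : κ → Finset Υ) :
    ∑ y ∈ s.biUnion D, V x y ≤ ∑ q ∈ s, ∑ y ∈ D q, V x y := by
  induction s using Finset.induction_on with
  | empty => simp
  | insert q s hq ih =>
    rw [biUnion_insert, sum_insert hq]
    have hsplit := sum_union_inter (s₁ := D q) (s₂ := s.biUnion D) (f := V x)
    have hinter := hV.sum_nonneg x (D q ∩ s.biUnion D)
    linarith

end Channels

section Events

variable {Ω : Type*} [Fintype Ω] {p : Ω → ℝ}

/-- The probability of the event `E` under the mass function `p`. The indicator keeps statements
free of decidability instances. -/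
def eventProb (p : Ω → ℝ) (E : Set Ω) : ℝ :=
  ∑ x, E.indicator p x

lemma IsPMF.eventProb_mono (hp : IsPMF p) {E F : Set Ω} (h : E ⊆ F) :
    eventProb p E ≤ eventProb p F :=
  sum_le_sum fun x _ => Set.indicator_le_indicator_of_subset h hp.1 x

lemma IsPMF.eventProb_union_le (hp : IsPMF p) (E F : Set Ω) :
    eventProb p (E ∪ F) ≤ eventProb p E + eventProb p F := by
  rw [eventProb, eventProb, eventProb, ← sum_add_distrib]
  refine sum_le_sum fun x _ => ?_
  have hunion := congrFun (Set.indicator_union_add_inter p E F) x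
  have hinter := Set.indicator_nonneg (s := E ∩ F) (fun x _ => hp.1 x) x
  simp only [Pi.add_apply] at hunion
  linarith

lemma IsPMF.eventProb_iUnion_le {κ : Type*} [Fintype κ] (hp : IsPMF p) (E : κ → Set Ω) :
    eventProb p (⋃ q, E q) ≤ ∑ q, eventProb p (E q) := by
  simp only [eventProb]
  rw [sum_comm]
  refine sum_le_sum fun x _ => ?_
  by_cases hx : x ∈ ⋃ q, E q
  · obtain ⟨q, hq⟩ := Set.mem_iUnion.1 hx
    rw [Set.indicator_of_mem hx, ← Set.indicator_of_mem hq p]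
    exact single_le_sum (f := fun q => (E q).indicator p x)
      (fun q _ => Set.indicator_nonneg (fun x _ => hp.1 x) x) (mem_univ q)
  · rw [Set.indicator_of_notMem hx]
    exact sum_nonneg fun q _ => Set.indicator_nonneg (fun x _ => hp.1 x) x

lemma IsPMF.exists_notMem_of_eventProb_lt_one (hp : IsPMF p) {E : Set Ω}
    (hE : eventProb p E < 1) : ∃ x, x ∉ E := by
  by_contra! hall
  exact hE.ne (by simpa [eventProb, Set.eq_univ_of_forall hall] using hp.2)

lemma IsPMF.eventProb_le_exp_mul (hp : IsPMF p) (Z : Ω → ℝ) (a : ℝ) :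
    eventProb p {x | a < Z x} ≤ Real.exp (-a) * ∑ x, p x * Real.exp (Z x) := by
  rw [eventProb, mul_sum]
  refine sum_le_sum fun x _ => Set.indicator_apply_le' (fun hx => ?_) fun _ =>
    mul_nonneg (Real.exp_pos _).le (mul_nonneg (hp.1 x) (Real.exp_pos _).le)
  rw [mul_left_comm, ← Real.exp_add]
  exact le_mul_of_one_le_right (hp.1 x) (Real.one_le_exp (by linarith [show a < Z x from hx]))

lemma isPMF_uniform [Nonempty Ω] : IsPMF fun _ : Ω => (Fintype.card Ω : ℝ)⁻¹ :=
  ⟨fun _ => by positivity, by simp⟩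

end Events

section IID

variable {I Ω : Type*} [Fintype I] {p : Ω → ℝ}

/-- The law of a family of independent `p`-distributed letters indexed by `I`; it serves both as
the `n`-letter input distribution and as the law of a random pool of codewords. -/
def iidPMF (p : Ω → ℝ) (c : I → Ω) : ℝ :=
  ∏ i, p (c i)

lemma iidPMF_piecewise_mul [DecidableEq I] (J : Finset I) (c u : I → Ω) :
    iidPMF p (J.piecewise u c) * iidPMF p (J.piecewise c u) = iidPMF p c * iidPMF p u := by
  simp only [iidPMF, ← prod_mul_distrib]
  refine prod_congr rfl fun i _ => ?_
  by_cases hi : i ∈ J <;> simp [hi, mul_comm]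

variable [Fintype Ω]

lemma IsPMF.iidPMF [DecidableEq I] (hp : IsPMF p) : IsPMF (iidPMF p : (I → Ω) → ℝ) :=
  ⟨fun _ => prod_nonneg fun _ _ => hp.1 _, by
    simp only [_root_.iidPMF, ← Fintype.prod_sum, hp.2, prod_const_one]⟩

lemma sum_iidPMF_piecewise [DecidableEq I] (hp : IsPMF p) (J : Finset I) (f : (I → Ω) → ℝ) :
    ∑ c, iidPMF p c * ∑ u, iidPMF p u * f (J.piecewise u c) = ∑ c, iidPMF p c * f c := by
  let swap : (I → Ω) × (I → Ω) → (I → Ω) × (I → Ω) := fun a =>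
    (J.piecewise a.2 a.1, J.piecewise a.1 a.2)
  have hswap : Function.Involutive swap := fun a =>
    Prod.ext (by simp [swap, piecewise_same]) (by simp [swap, piecewise_same])
  calc ∑ c, iidPMF p c * ∑ u, iidPMF p u * f (J.piecewise u c)
      = ∑ a : (I → Ω) × (I → Ω), iidPMF p (swap a).1 * iidPMF p (swap a).2 * f (swap a).1 := by
        simp only [mul_sum, Fintype.sum_prod_type, swap, iidPMF_piecewise_mul, mul_assoc]
    _ = ∑ a : (I → Ω) × (I → Ω), iidPMF p a.1 * iidPMF p a.2 * f a.1 :=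
        hswap.bijective.sum_comp fun a => iidPMF p a.1 * iidPMF p a.2 * f a.1
    _ = ∑ c, iidPMF p c * f c * ∑ u, iidPMF p (u : I → Ω) := by
        simp only [Fintype.sum_prod_type, mul_sum, mul_right_comm]
    _ = ∑ c, iidPMF p c * f c := by simp only [hp.iidPMF.2, mul_one]

lemma sum_iidPMF_mul_prod [DecidableEq I] (hp : IsPMF p) (J : Finset I) (H : I → Ω → ℝ) :
    ∑ u, iidPMF p u * ∏ j ∈ J, H j (u j) = ∏ j ∈ J, ∑ x, p x * H j x := by
  calc ∑ u, iidPMF p u * ∏ j ∈ J, H j (u j)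
      = ∑ u : I → Ω, ∏ i, p (u i) * if i ∈ J then H i (u i) else 1 := by
        simp only [iidPMF, prod_mul_distrib, prod_ite_mem, univ_inter]
    _ = ∏ i, ∑ x, p x * if i ∈ J then H i x else 1 :=
        (Fintype.prod_sum fun i x => p x * if i ∈ J then H i x else 1).symm
    _ = ∏ i, if i ∈ J then ∑ x, p x * H i x else 1 := by
        refine prod_congr rfl fun i _ => ?_
        split_ifs <;> simp [hp.2]
    _ = ∏ j ∈ J, ∑ x, p x * H j x := by rw [prod_ite_mem, univ_inter]

lemma IsPMF.sum_mul_exp_le (hp : IsPMF p) {g : Ω → ℝ} {ε : ℝ} (hg0 : ∀ x, 0 ≤ g x)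
    (hg1 : ∀ x, g x ≤ 1) (hmean : ∑ x, p x * g x ≤ ε) :
    ∑ x, p x * Real.exp (g x) ≤ Real.exp (2 * ε) := by
  have hexp (x : Ω) : Real.exp (g x) ≤ 1 + 2 * g x := by
    have hdev := Real.abs_exp_sub_one_le (abs_le.2 ⟨by linarith [hg0 x], hg1 x⟩)
    rw [abs_of_nonneg (hg0 x)] at hdev
    linarith [le_abs_self (Real.exp (g x) - 1)]
  calc ∑ x, p x * Real.exp (g x) ≤ ∑ x, p x * (1 + 2 * g x) :=
        sum_le_sum fun x _ => mul_le_mul_of_nonneg_left (hexp x) (hp.1 x)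
    _ = 1 + 2 * ∑ x, p x * g x := by
        simp only [mul_add, sum_add_distrib, mul_one, hp.2, mul_sum, mul_left_comm]
    _ ≤ 2 * ε + 1 := by linarith
    _ ≤ Real.exp (2 * ε) := Real.add_one_le_exp _

/-- Conditionally on the letters outside `J`, the summands are independent: `h j` may look at the
whole family, but not at any of the letters in `J` other than its explicit argument. -/
lemma sum_iidPMF_mul_exp_le [DecidableEq I] (hp : IsPMF p) {J : Finset I}
    {h : I → (I → Ω) → Ω → ℝ} {ε : ℝ} (h0 : ∀ j c x, 0 ≤ h j c x) (h1 : ∀ j c x, h j c x ≤ 1)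
    (hdep : ∀ j ∈ J, DependsOn (h j) (J : Set I)ᶜ)
    (hmean : ∀ j ∈ J, ∀ c, ∑ x, p x * h j c x ≤ ε) :
    ∑ c, iidPMF p c * Real.exp (∑ j ∈ J, h j c (c j)) ≤ Real.exp (2 * ε * #J) := by
  have hresample (c u : I → Ω) : Real.exp (∑ j ∈ J, h j (J.piecewise u c) (J.piecewise u c j)) =
      ∏ j ∈ J, Real.exp (h j c (u j)) := by
    rw [Real.exp_sum]
    refine prod_congr rfl fun j hj => ?_
    rw [piecewise_eq_of_mem _ _ _ hj, hdep j hj fun i hi => piecewise_eq_of_notMem _ _ _ hi]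
  have hcond (c : I → Ω) :
      ∑ u, iidPMF p u * ∏ j ∈ J, Real.exp (h j c (u j)) ≤ Real.exp (2 * ε * #J) :=
    calc ∑ u, iidPMF p u * ∏ j ∈ J, Real.exp (h j c (u j))
        = ∏ j ∈ J, ∑ x, p x * Real.exp (h j c x) :=
          sum_iidPMF_mul_prod hp J fun j x => Real.exp (h j c x)
      _ ≤ ∏ _j ∈ J, Real.exp (2 * ε) := by
          refine prod_le_prod (fun j _ => ?_) fun j hj =>
            hp.sum_mul_exp_le (h0 j c) (h1 j c) (hmean j hj c)
          exact sum_nonneg fun x _ => mul_nonneg (hp.1 x) (Real.exp_pos _).le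
      _ = Real.exp (2 * ε * #J) := by rw [prod_const, ← Real.exp_nat_mul, mul_comm]
  rw [← sum_iidPMF_piecewise hp J]
  simp only [hresample]
  calc ∑ c, iidPMF p c * ∑ u, iidPMF p u * ∏ j ∈ J, Real.exp (h j c (u j))
      ≤ ∑ c : I → Ω, iidPMF p c * Real.exp (2 * ε * #J) :=
        sum_le_sum fun c _ => mul_le_mul_of_nonneg_left (hcond c) (hp.iidPMF.1 c)
    _ = Real.exp (2 * ε * #J) := by rw [← sum_mul, hp.iidPMF.2, one_mul]

lemma eventProb_exists_lt_sum_le [DecidableEq I] {κ : Type*} [Fintype κ] (hp : IsPMF p)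
    {J : κ → Finset I} {h : κ → I → (I → Ω) → Ω → ℝ} {ε N : ℝ} (hε : 0 ≤ ε)
    (hJ : ∀ q, #(J q) ≤ N) (h0 : ∀ q j c x, 0 ≤ h q j c x) (h1 : ∀ q j c x, h q j c x ≤ 1)
    (hdep : ∀ q, ∀ j ∈ J q, DependsOn (h q j) (J q : Set I)ᶜ)
    (hmean : ∀ q, ∀ j ∈ J q, ∀ c, ∑ x, p x * h q j c x ≤ ε / 4) :
    eventProb (iidPMF p) {c | ∃ q, ε * N < ∑ j ∈ J q, h q j c (c j)} ≤
      Fintype.card κ * Real.exp (-(ε * N / 2)) := by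
  have htail (q : κ) : eventProb (iidPMF p) {c | ε * N < ∑ j ∈ J q, h q j c (c j)} ≤
      Real.exp (-(ε * N / 2)) :=
    calc eventProb (iidPMF p) {c | ε * N < ∑ j ∈ J q, h q j c (c j)}
        ≤ Real.exp (-(ε * N)) * ∑ c, iidPMF p c * Real.exp (∑ j ∈ J q, h q j c (c j)) :=
          hp.iidPMF.eventProb_le_exp_mul _ _
      _ ≤ Real.exp (-(ε * N)) * Real.exp (2 * (ε / 4) * #(J q)) :=
          mul_le_mul_of_nonneg_left
            (sum_iidPMF_mul_exp_le hp (h0 q) (h1 q) (hdep q) (hmean q)) (Real.exp_pos _).le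
      _ ≤ Real.exp (-(ε * N / 2)) := by
          rw [← Real.exp_add, Real.exp_le_exp]
          linarith [mul_le_mul_of_nonneg_left (hJ q) hε]
  rw [Set.ofPred_exists]
  exact (hp.iidPMF.eventProb_iUnion_le _).trans <|
    (sum_le_sum fun q _ => htail q).trans_eq (by simp)

end IID

section AgreementCodes

variable {ι T B : Type*} [Fintype T] [DecidableEq B]

/-- The words `F i : T → B` form a block code in which two distinct words agree in at most `d`
positions. -/
def IsAgreementCode (F : ι → T → B) (d : ℝ) : Prop :=
  ∀ i j, i ≠ j → (#{t | F i t = F j t} : ℝ) ≤ d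

lemma exists_isAgreementCode [Fintype ι] [Fintype B] [Nonempty B] {ε : ℝ} (hε : 0 ≤ ε)
    (hB : 4 ≤ ε * Fintype.card B)
    (hι : (Fintype.card ι : ℝ) ^ 2 * Real.exp (-(ε * Fintype.card T / 2)) < 1) :
    ∃ F : ι → T → B, IsAgreementCode F (ε * Fintype.card T) := by
  classical
  have hB0 : (0 : ℝ) < Fintype.card B := by positivity
  let J : {q : ι × ι // q.1 ≠ q.2} → Finset (ι × T) :=
    fun q => univ.map (Function.Embedding.sectR q.1.1 T)
  let agree : {q : ι × ι // q.1 ≠ q.2} → ι × T → (ι × T → B) → B → ℝ :=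
    fun q j c b => if b = c (q.1.2, j.2) then 1 else 0
  have hcard : (Fintype.card {q : ι × ι // q.1 ≠ q.2} : ℝ) ≤ (Fintype.card ι : ℝ) ^ 2 := by
    exact_mod_cast (Fintype.card_subtype_le _).trans_eq (by rw [Fintype.card_prod, sq])
  have hbad := eventProb_exists_lt_sum_le (isPMF_uniform (Ω := B)) (J := J) (h := agree) hε
    (N := Fintype.card T) (fun q => by simp [J]) (fun q j c b => by positivity)
    (fun q j c b => by simp only [agree]; split_ifs <;> norm_num)
    (fun q j _ c c' hcc' => by
      have hrow : (q.1.2, j.2) ∈ (J q : Set (ι × T))ᶜ := by simpa [J] using q.2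
      simp only [agree, hcc' _ hrow])
    (fun q j _ c => by
      simp only [agree, mul_ite, mul_one, mul_zero, sum_ite_eq', mem_univ, if_true]
      rw [inv_le_iff_one_le_mul₀ hB0]
      linarith)
  obtain ⟨c, hc⟩ := isPMF_uniform.iidPMF.exists_notMem_of_eventProb_lt_one (hbad.trans_lt
    ((mul_le_mul_of_nonneg_right hcard (Real.exp_pos _).le).trans_lt hι))
  refine ⟨fun i t => c (i, t), fun i j hij => not_lt.1 fun hlt => hc ⟨⟨(i, j), hij⟩, ?_⟩⟩
  rw [sum_map]
  simpa [agree] using hlt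

lemma exists_isAgreementCode_of_card_le [Fintype ι] [Fintype B] [Nonempty B] {ε : ℝ} {N : ℕ}
    (hε : 0 ≤ ε) (hB : 4 ≤ ε * Fintype.card B) (hN : Fintype.card ι ≤ N)
    (hlt : 4 * (N : ℝ) ^ 2 * Real.exp (-(ε * Fintype.card T / 2)) < 1) :
    ∃ F : ι → T → B, IsAgreementCode F (ε * Fintype.card T) := by
  refine exists_isAgreementCode hε hB (lt_of_le_of_lt ?_ hlt)
  gcongr
  have hsq : (Fintype.card ι : ℝ) ^ 2 ≤ (N : ℝ) ^ 2 := by gcongr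
  linarith [sq_nonneg (N : ℝ)]

end AgreementCodes

section RandomPool

variable {ι U T B C I Ω Υ : Type*} [Fintype T] [Fintype C]

/-- `D` is a family of tests for the hypothesis that the word `x` was sent over `V`: if `x` is
drawn from `p`, the true word is rejected with probability at most `α`, and for every `x'` the
output caused by an independent `p`-distributed word passes the test for `x'` with probability at
most `β`. -/
structure IsCodewordTest [Fintype Ω] [Fintype Υ] [DecidableEq Υ] (p : Ω → ℝ) (V : Ω → Υ → ℝ)
    (D : Ω → Finset Υ) (α β : ℝ) : Prop where
  miss_le : ∑ x, p x * ∑ y ∈ (D x)ᶜ, V x y ≤ α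
  cross_le : ∀ x', ∑ x, p x * ∑ y ∈ D x', V x y ≤ β

lemma IsCodewordTest.mono [Fintype Ω] [Fintype Υ] [DecidableEq Υ] {p : Ω → ℝ} {V : Ω → Υ → ℝ}
    {D : Ω → Finset Υ} {α α' β β' : ℝ} (hD : IsCodewordTest p V D α β) (hα : α ≤ α')
    (hβ : β ≤ β') : IsCodewordTest p V D α' β' :=
  ⟨hD.miss_le.trans hα, fun x' => (hD.cross_le x').trans hβ⟩

lemma IsCodewordTest.sum_biUnion_le [Fintype Ω] [Fintype Υ] [DecidableEq Υ] {p : Ω → ℝ}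
    {V : Ω → Υ → ℝ} {D : Ω → Finset Υ} {α β : ℝ} (hp : IsPMF p) (hV : IsChannel V)
    (hD : IsCodewordTest p V D α β) {κ : Type*} (s : Finset κ) (x' : κ → Ω) :
    ∑ x, p x * ∑ y ∈ s.biUnion (fun q => D (x' q)), V x y ≤ #s * β :=
  calc ∑ x, p x * ∑ y ∈ s.biUnion (fun q => D (x' q)), V x y
      ≤ ∑ x, p x * ∑ q ∈ s, ∑ y ∈ D (x' q), V x y :=
        sum_le_sum fun x _ => mul_le_mul_of_nonneg_left (hV.sum_biUnion_le x s _) (hp.1 x)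
    _ = ∑ q ∈ s, ∑ x, p x * ∑ y ∈ D (x' q), V x y := by
        simp only [mul_sum]
        rw [sum_comm]
    _ ≤ #s * β := by
        simpa using sum_le_card_nsmul s _ β fun q _ => hD.cross_le (x' q)

/-- An identification code in which the message `μ` is sent as a uniformly distributed element of
the family `x μ : N → Ω`, with both error probabilities cleared of the denominator `card N`. -/
structure IsAvgIDCode {M N : Type*} [Fintype N] [Fintype Υ] [DecidableEq Υ] (V : Ω → Υ → ℝ)
    (x : M → N → Ω) (D : M → Finset Υ) (l₁ l₂ : ℝ) : Prop where
  miss_le : ∀ μ, ∑ a, ∑ y ∈ (D μ)ᶜ, V (x μ a) y ≤ l₁ * Fintype.card N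
  false_le : ∀ μ ν, μ ≠ ν → ∑ a, ∑ y ∈ D ν, V (x μ a) y ≤ l₂ * Fintype.card N

/-- The block of the message `(i, u)` in a pool indexed through `e`: the indices
`(u, t, F i t, w)` with arbitrary `t` and `w`. -/
def poolIndex (e : U × T × B × C ↪ I) (F : ι → T → B) (μ : ι × U) : T × C ↪ I where
  toFun q := e (μ.2, q.1, F μ.1 q.1, q.2)
  inj' q q' h := by
    obtain ⟨-, h₁, -, h₂⟩ := by simpa only [Prod.mk.injEq] using e.injective h
    exact Prod.ext h₁ h₂

/-- The decoding set of a message in the pool `c`: the outputs accepted by the test of one of the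
codewords in its block. -/
def blockDecoder [DecidableEq Υ] (e : U × T × B × C ↪ I) (F : ι → T → B) (D : Ω → Finset Υ)
    (c : I → Ω) (μ : ι × U) : Finset Υ :=
  univ.biUnion fun q => D (c (poolIndex e F μ q))

/-- The part of the block of `μ` on which the coordinate in `C` is `w`. -/
def poolLine (e : U × T × B × C ↪ I) (F : ι → T → B) (μ : ι × U) (w : C) : T ↪ I :=
  (Function.Embedding.sectL T w).trans (poolIndex e F μ)

lemma card_poolLine_filter_mem_block_le [DecidableEq B] [DecidableEq I]
    (e : U × T × B × C ↪ I) {F : ι → T → B} {d : ℝ} (hF : IsAgreementCode F d) (hd : 0 ≤ d)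
    {μ ν : ι × U} (hμν : μ ≠ ν) (w : C) :
    (#{t | poolLine e F μ w t ∈ univ.map (poolIndex e F ν)} : ℝ) ≤ d := by
  have hmem (t : T) (ht : poolLine e F μ w t ∈ univ.map (poolIndex e F ν)) :
      μ.2 = ν.2 ∧ F μ.1 t = F ν.1 t := by
    obtain ⟨q, -, hq⟩ := mem_map.1 ht
    obtain ⟨hu, ht, hb, -⟩ := by simpa only [Prod.mk.injEq] using e.injective hq
    exact ⟨hu.symm, (hb.symm.trans (congrArg (F ν.1) ht) :)⟩
  by_cases hi : μ.1 = ν.1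
  · rw [filter_false_of_mem fun t _ ht => hμν (Prod.ext hi (hmem t ht).1)]
    simpa using hd
  · exact (Nat.cast_le.2 (card_le_card (monotone_filter_right univ
      fun t _ ht => (hmem t ht).2))).trans (hF _ _ hi)

variable [Fintype Υ] [DecidableEq Υ] {p : Ω → ℝ} {V : Ω → Υ → ℝ} {D : Ω → Finset Υ} {ε β : ℝ}

lemma isAvgIDCode_poolLine [DecidableEq B] [DecidableEq I] (hV : IsChannel V) (hε : 0 ≤ ε)
    (e : U × T × B × C ↪ I) {F : ι → T → B} (hF : IsAgreementCode F (ε * Fintype.card T))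
    {c : I → Ω} {w : C}
    (hmiss : ∀ μ, ∑ t, ∑ y ∈ (D (c (poolLine e F μ w t)))ᶜ, V (c (poolLine e F μ w t)) y ≤
      ε * Fintype.card T)
    (hfalse : ∀ μ ν, ∑ t with poolLine e F μ w t ∉ univ.map (poolIndex e F ν),
      ∑ y ∈ blockDecoder e F D c ν, V (c (poolLine e F μ w t)) y ≤ ε * Fintype.card T) :
    IsAvgIDCode V (fun μ t => c (poolLine e F μ w t)) (blockDecoder e F D c) ε (2 * ε) where
  miss_le μ := by
    refine (sum_le_sum fun t _ => hV.sum_mono _ (compl_subset_compl.2 ?_)).trans (hmiss μ)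
    exact subset_biUnion_of_mem (fun q => D (c (poolIndex e F μ q))) (mem_univ (t, w))
  false_le μ ν hμν := by
    have hoverlap : ∑ t with poolLine e F μ w t ∈ univ.map (poolIndex e F ν),
        ∑ y ∈ blockDecoder e F D c ν, V (c (poolLine e F μ w t)) y ≤ ε * Fintype.card T :=
      (sum_le_card_nsmul _ _ 1 fun t _ => hV.sum_le_one _ _).trans
        (by simpa using card_poolLine_filter_mem_block_le e hF (by positivity) hμν w)
    rw [← sum_filter_add_sum_filter_not univ
      fun t => poolLine e F μ w t ∈ univ.map (poolIndex e F ν)]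
    linarith [hfalse μ ν]

variable [Fintype ι] [Fintype U] [Fintype I] [Fintype Ω]

lemma eventProb_poolLine_miss_le [DecidableEq I] (hp : IsPMF p) (hV : IsChannel V)
    (hD : IsCodewordTest p V D (ε / 4) β) (hε : 0 ≤ ε) (e : U × T × B × C ↪ I) (F : ι → T → B) :
    eventProb (iidPMF p) {c : I → Ω | ∃ q : (ι × U) × C, ε * Fintype.card T <
        ∑ t, ∑ y ∈ (D (c (poolLine e F q.1 q.2 t)))ᶜ, V (c (poolLine e F q.1 q.2 t)) y} ≤
      Fintype.card ((ι × U) × C) * Real.exp (-(ε * Fintype.card T / 2)) := by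
  have htail := eventProb_exists_lt_sum_le hp (J := fun q => univ.map (poolLine e F q.1 q.2))
    (h := fun (_ : (ι × U) × C) _ _ x => ∑ y ∈ (D x)ᶜ, V x y) hε (N := Fintype.card T)
    (fun q => by simp) (fun _ _ _ x => hV.sum_nonneg x _) (fun _ _ _ x => hV.sum_le_one x _)
    (fun _ _ _ _ _ _ => rfl) (fun _ _ _ _ => hD.miss_le)
  simpa only [sum_map] using htail

lemma eventProb_poolLine_false_le [DecidableEq I] (hp : IsPMF p) (hV : IsChannel V) {α : ℝ}
    (hD : IsCodewordTest p V D α β) (hβ : Fintype.card (T × C) * β ≤ ε / 4) (hε : 0 ≤ ε)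
    (e : U × T × B × C ↪ I) (F : ι → T → B) :
    eventProb (iidPMF p) {c : I → Ω | ∃ q : ((ι × U) × (ι × U)) × C, ε * Fintype.card T <
        ∑ t with poolLine e F q.1.1 q.2 t ∉ univ.map (poolIndex e F q.1.2),
          ∑ y ∈ blockDecoder e F D c q.1.2, V (c (poolLine e F q.1.1 q.2 t)) y} ≤
      Fintype.card (((ι × U) × (ι × U)) × C) * Real.exp (-(ε * Fintype.card T / 2)) := by
  have htail := eventProb_exists_lt_sum_le hp
    (J := fun q => ({t | poolLine e F q.1.1 q.2 t ∉ univ.map (poolIndex e F q.1.2)} : Finset T).map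
      (poolLine e F q.1.1 q.2))
    (h := fun (q : ((ι × U) × (ι × U)) × C) _ c x => ∑ y ∈ blockDecoder e F D c q.1.2, V x y) hε
    (N := Fintype.card T)
    (fun q => by rw [card_map]; exact_mod_cast card_le_univ _)
    (fun _ _ _ x => hV.sum_nonneg x _) (fun _ _ _ x => hV.sum_le_one x _)
    (fun q _ _ c c' hcc' => by
      have hblock : blockDecoder e F D c q.1.2 = blockDecoder e F D c' q.1.2 := by
        refine biUnion_congr rfl fun a _ => congrArg D (hcc' _ fun hmem => ?_)
        obtain ⟨t, ht, hta⟩ := mem_map.1 (mem_coe.1 hmem)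
        exact (mem_filter.1 ht).2 (hta ▸ mem_map_of_mem _ (mem_univ a))
      simp only [hblock])
    (fun q _ _ c => (hD.sum_biUnion_le hp hV univ _).trans hβ)
  simpa only [sum_map] using htail

lemma eventProb_not_forall_isAvgIDCode_le [DecidableEq B] [DecidableEq I] (hp : IsPMF p)
    (hV : IsChannel V) (hD : IsCodewordTest p V D (ε / 4) β)
    (hβ : Fintype.card (T × C) * β ≤ ε / 4) (hε : 0 ≤ ε) (e : U × T × B × C ↪ I)
    {F : ι → T → B} (hF : IsAgreementCode F (ε * Fintype.card T)) :
    eventProb (iidPMF p) {c : I → Ω | ¬ ∀ w, IsAvgIDCode V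
        (fun μ t => c (poolLine e F μ w t)) (blockDecoder e F D c) ε (2 * ε)} ≤
      2 * (Fintype.card ((ι × U) × C) : ℝ) ^ 2 * Real.exp (-(ε * Fintype.card T / 2)) := by
  have hcard₁ : (Fintype.card ((ι × U) × C) : ℝ) ≤ (Fintype.card ((ι × U) × C) : ℝ) ^ 2 := by
    exact_mod_cast Nat.le_self_pow two_ne_zero _
  have hcard₂ : (Fintype.card (((ι × U) × (ι × U)) × C) : ℝ) ≤
      (Fintype.card ((ι × U) × C) : ℝ) ^ 2 := by
    rw [Fintype.card_prod (ι × U) C, Fintype.card_prod _ C, Fintype.card_prod (ι × U), ← sq]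
    exact_mod_cast (Nat.mul_le_mul_left _ (Nat.le_self_pow two_ne_zero _)).trans_eq
      (mul_pow _ _ 2).symm
  have hexp := Real.exp_pos (-(ε * Fintype.card T / 2))
  refine (hp.iidPMF.eventProb_mono fun c hc => ?_).trans ((hp.iidPMF.eventProb_union_le _ _).trans
    ((add_le_add (eventProb_poolLine_miss_le hp hV hD hε e F)
      (eventProb_poolLine_false_le hp hV hD hβ hε e F)).trans ?_))
  · by_contra hgood
    simp only [Set.mem_union, Set.mem_ofPred_eq, not_or, not_exists, not_lt] at hgood
    exact hc fun w => isAvgIDCode_poolLine hV hε e hF (fun μ => hgood.1 (μ, w))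
      fun μ ν => hgood.2 ((μ, ν), w)
  · rw [← add_mul]
    exact mul_le_mul_of_nonneg_right (by linarith) hexp.le

end RandomPool

section OneShot

variable {M N Ω Υ Ζ : Type*} [Fintype Υ] [DecidableEq Υ] [Fintype Ζ] [DecidableEq Ζ]
  {V : Ω → Υ → ℝ} {l₁ l₂ : ℝ}

lemma IsAvgIDCode.mono [Fintype N] {x : M → N → Ω} {D : M → Finset Υ} {l₁' l₂' : ℝ}
    (h : IsAvgIDCode V x D l₁ l₂) (h₁ : l₁ ≤ l₁') (h₂ : l₂ ≤ l₂') : IsAvgIDCode V x D l₁' l₂' where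
  miss_le μ := (h.miss_le μ).trans (by gcongr)
  false_le μ ν hμν := (h.false_le μ ν hμν).trans (by gcongr)

lemma IsAvgIDCode.mix [Fintype N] {A C : Type*} [Fintype A] {x : C → M → N → Ω}
    {D : M → Finset Υ} (h : ∀ w, IsAvgIDCode V (x w) D l₁ l₂) (g : M → A → C) :
    IsAvgIDCode V (fun μ (q : A × N) => x (g μ q.1) μ q.2) D l₁ l₂ where
  miss_le μ := by
    rw [Fintype.sum_prod_type, Fintype.card_prod, Nat.cast_mul, mul_left_comm, ← nsmul_eq_mul]
    exact sum_le_card_nsmul univ _ _ fun a _ => (h (g μ a)).miss_le μ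
  false_le μ ν hμν := by
    rw [Fintype.sum_prod_type, Fintype.card_prod, Nat.cast_mul, mul_left_comm, ← nsmul_eq_mul]
    exact sum_le_card_nsmul univ _ _ fun a _ => (h (g μ a)).false_le μ ν hμν

lemma IsAvgIDCode.comp [Fintype N] {M' N' : Type*} [Fintype N'] {x : M → N → Ω}
    {D : M → Finset Υ} (h : IsAvgIDCode V x D l₁ l₂) {f : M' → M} (hf : Function.Injective f)
    (g : N' ≃ N) : IsAvgIDCode V (fun μ a => x (f μ) (g a)) (fun μ => D (f μ)) l₁ l₂ where
  miss_le μ := by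
    rw [Fintype.card_congr g, g.sum_comp fun a => ∑ y ∈ (D (f μ))ᶜ, V (x (f μ) a) y]
    exact h.miss_le (f μ)
  false_le μ ν hμν := by
    rw [Fintype.card_congr g, g.sum_comp fun a => ∑ y ∈ D (f ν), V (x (f μ) a) y]
    exact h.false_le _ _ (hf.ne hμν)

/-- The pool index of a message triple. The `Y`-receiver's private message has a component `s`
and the `Z`-receiver's a component `t`, which address a cell of the pool; the two words select the
codeword inside the cell. -/
def broadcastIndex {K AY AZ S T B C : Type*} (F : K × AY → T → B) (G : K × AZ → S → C)
    (m : K) (my : AY × S) (mz : AZ × T) : S × T × B × C :=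
  (my.2, mz.2, F (m, my.1) mz.2, G (m, mz.1) my.2)

/-- The coordinates of the pool in the order in which `poolIndex` addresses them for the
`Z`-receiver. -/
def poolSwap (S T B C : Type*) : T × S × C × B ↪ S × T × B × C where
  toFun a := (a.2.1, a.1, a.2.2.2, a.2.2.1)
  inj' a a' h := by
    obtain ⟨h₁, h₂, h₃, h₄⟩ := by simpa only [Prod.mk.injEq] using h
    exact Prod.ext h₂ (Prod.ext h₁ (Prod.ext h₄ h₃))

variable {K AY AZ S T B C : Type*} [Fintype K] [Fintype AY] [Fintype AZ] [Fintype S] [Fintype T]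
  [Fintype B] [Fintype C] [Fintype Ω] {ε : ℝ}

theorem exists_broadcast_isAvgIDCode [Nonempty S] [Nonempty T] [Nonempty B] [Nonempty C]
    {p : Ω → ℝ} {VY : Ω → Υ → ℝ} {VZ : Ω → Ζ → ℝ} {DY : Ω → Finset Υ} {DZ : Ω → Finset Ζ}
    {βY βZ : ℝ} (hp : IsPMF p) (hε : 0 ≤ ε)
    (hB : 4 ≤ ε * Fintype.card B) (hC : 4 ≤ ε * Fintype.card C)
    (hVY : IsChannel VY) (hDY : IsCodewordTest p VY DY (ε / 4) βY)
    (hβY : Fintype.card (T × C) * βY ≤ ε / 4)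
    (hT : 4 * (Fintype.card (((K × AY) × S) × C) : ℝ) ^ 2 *
      Real.exp (-(ε * Fintype.card T / 2)) < 1)
    (hVZ : IsChannel VZ) (hDZ : IsCodewordTest p VZ DZ (ε / 4) βZ)
    (hβZ : Fintype.card (S × B) * βZ ≤ ε / 4)
    (hS : 4 * (Fintype.card (((K × AZ) × T) × B) : ℝ) ^ 2 *
      Real.exp (-(ε * Fintype.card S / 2)) < 1) :
    ∃ (x : K → AY × S → AZ × T → Ω) (EY : K × AY × S → Finset Υ) (EZ : K × AZ × T → Finset Ζ),
      IsAvgIDCode VY (fun μ mz => x μ.1 μ.2 mz) EY ε (2 * ε) ∧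
      IsAvgIDCode VZ (fun μ my => x μ.1 my μ.2) EZ ε (2 * ε) := by
  classical
  obtain ⟨F, hF⟩ := exists_isAgreementCode_of_card_le hε hB
    (Fintype.card_le_of_surjective (fun a : ((K × AY) × S) × C => a.1.1)
      (Prod.fst_surjective.comp Prod.fst_surjective)) hT
  obtain ⟨G, hG⟩ := exists_isAgreementCode_of_card_le hε hC
    (Fintype.card_le_of_surjective (fun a : ((K × AZ) × T) × B => a.1.1)
      (Prod.fst_surjective.comp Prod.fst_surjective)) hS
  let eY := Function.Embedding.refl (S × T × B × C)
  let eZ := poolSwap S T B C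
  have hbadY := eventProb_not_forall_isAvgIDCode_le hp hVY hDY hβY hε eY hF
  have hbadZ := eventProb_not_forall_isAvgIDCode_le hp hVZ hDZ hβZ hε eZ hG
  obtain ⟨c, hc⟩ := hp.iidPMF.exists_notMem_of_eventProb_lt_one
    (((hp.iidPMF.eventProb_union_le _ _).trans (add_le_add hbadY hbadZ)).trans_lt (by linarith))
  simp only [Set.mem_union, Set.mem_ofPred_eq, not_or, not_not] at hc
  have hY := (IsAvgIDCode.mix hc.1 fun (μ : (K × AY) × S) z => G (μ.1.1, z) μ.2).comp
    (Equiv.prodAssoc K AY S).symm.injective (Equiv.refl (AZ × T))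
  have hZ := (IsAvgIDCode.mix hc.2 fun (μ : (K × AZ) × T) y => F (μ.1.1, y) μ.2).comp
    (Equiv.prodAssoc K AZ T).symm.injective (Equiv.refl (AY × S))
  exact ⟨fun m my mz => c (broadcastIndex F G m my mz), _, _, hY, hZ⟩

end OneShot

section InfoDensity

variable {Ω Υ : Type*} [Fintype Ω] {p : Ω → ℝ} {V : Ω → Υ → ℝ}

/-- The distribution of the output of the channel `V` under the input distribution `p`. -/
def outputDist (p : Ω → ℝ) (V : Ω → Υ → ℝ) (y : Υ) : ℝ :=
  ∑ x, p x * V x y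

/-- The information density `log (V(y|x) / pV(y))`, whose mean is the mutual information. It takes
the junk value `0` where the quotient vanishes, which only happens at pairs of probability `0`. -/
def infoDensity (p : Ω → ℝ) (V : Ω → Υ → ℝ) (x : Ω) (y : Υ) : ℝ :=
  Real.log (V x y / outputDist p V y)

/-- The expectation of `exp (-s * i)`, where `i` is the information density. -/
def infoMoment [Fintype Υ] (p : Ω → ℝ) (V : Ω → Υ → ℝ) (s : ℝ) : ℝ :=
  ∑ x, ∑ y, p x * V x y * Real.exp (-s * infoDensity p V x y)

/-- The outputs whose likelihood under the input `x` exceeds `exp a` times their likelihood under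
a random input. -/
def thresholdTest [Fintype Υ] (p : Ω → ℝ) (V : Ω → Υ → ℝ) (a : ℝ) (x : Ω) : Finset Υ :=
  {y | Real.exp a * outputDist p V y < V x y}

lemma IsPMF.outputDist_pos (hp : IsPMF p) (hV : ∀ x y, 0 ≤ V x y) {x : Ω} {y : Υ} (hx : 0 < p x)
    (hxy : 0 < V x y) : 0 < outputDist p V y :=
  (mul_pos hx hxy).trans_le <| single_le_sum (f := fun x => p x * V x y)
    (fun x _ => mul_nonneg (hp.1 x) (hV x y)) (mem_univ x)

lemma mutInf_eq_sum_infoDensity [Fintype Υ] (p : Ω → ℝ) (V : Ω → Υ → ℝ) :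
    mutInf p V = ∑ x, ∑ y, p x * V x y * infoDensity p V x y := by
  refine sum_congr rfl fun x _ => sum_congr rfl fun y _ => ?_
  split_ifs with h
  · rw [h, zero_mul]
  · rfl

lemma IsPMF.sum_sum_mul_eq_one [Fintype Υ] (hp : IsPMF p) (hV : IsChannel V) :
    ∑ x, ∑ y, p x * V x y = 1 := by
  simp only [← mul_sum, hV.2, mul_one, hp.2]

lemma infoMoment_nonneg [Fintype Υ] (hp : IsPMF p) (hV : IsChannel V) (s : ℝ) :
    0 ≤ infoMoment p V s :=
  sum_nonneg fun x _ => sum_nonneg fun y _ =>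
    mul_nonneg (mul_nonneg (hp.1 x) (hV.1 x y)) (Real.exp_pos _).le

lemma infoMoment_zero [Fintype Υ] (hp : IsPMF p) (hV : IsChannel V) : infoMoment p V 0 = 1 := by
  simpa [infoMoment] using hp.sum_sum_mul_eq_one hV

lemma hasDerivAt_infoMoment_zero [Fintype Υ] (p : Ω → ℝ) (V : Ω → Υ → ℝ) :
    HasDerivAt (infoMoment p V) (-mutInf p V) 0 := by
  rw [mutInf_eq_sum_infoDensity, ← sum_neg_distrib]
  simp only [← sum_neg_distrib]
  refine HasDerivAt.fun_sum fun x _ => HasDerivAt.fun_sum fun y _ => ?_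
  simpa using (((hasDerivAt_id (0 : ℝ)).neg.mul_const (infoDensity p V x y)).exp.const_mul
    (p x * V x y))

lemma exists_exp_mul_infoMoment_lt_one [Fintype Υ] (hp : IsPMF p) (hV : IsChannel V) {r : ℝ}
    (hr : r < mutInf p V) : ∃ s > 0, Real.exp (s * r) * infoMoment p V s < 1 := by
  let f : ℝ → ℝ := fun s => Real.exp (s * r) * infoMoment p V s
  have hf0 : f 0 = 1 := by simp [f, infoMoment_zero hp hV]
  have hf : HasDerivAt f (r - mutInf p V) 0 := by
    have hprod := ((hasDerivAt_id (0 : ℝ)).mul_const r).exp.fun_mul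
      (hasDerivAt_infoMoment_zero p V)
    simpa [infoMoment_zero hp hV, sub_eq_add_neg] using hprod
  have hslope := (hasDerivAt_iff_tendsto_slope.1 hf).eventually_lt_const (sub_neg.2 hr)
  obtain ⟨s, hs, hs0⟩ := ((hslope.filter_mono (nhdsGT_le_nhdsNE 0)).and
    self_mem_nhdsWithin).exists
  exact ⟨s, hs0, hf0 ▸ (slope_neg_iff_of_le (le_of_lt hs0)).1 hs⟩

lemma thresholdTest_cross_le [Fintype Υ] (hV : IsChannel V) (a : ℝ) (x' : Ω) :
    ∑ x, p x * ∑ y ∈ thresholdTest p V a x', V x y ≤ Real.exp (-a) :=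
  calc ∑ x, p x * ∑ y ∈ thresholdTest p V a x', V x y
      = ∑ y ∈ thresholdTest p V a x', outputDist p V y := by
        simp only [mul_sum, outputDist]
        exact sum_comm
    _ ≤ ∑ y ∈ thresholdTest p V a x', Real.exp (-a) * V x' y := by
        refine sum_le_sum fun y hy => ?_
        rw [Real.exp_neg, ← div_eq_inv_mul, le_div_iff₀' (Real.exp_pos a)]
        exact (mem_filter.1 hy).2.le
    _ ≤ Real.exp (-a) := by
        rw [← mul_sum]
        exact mul_le_of_le_one_right (Real.exp_pos _).le (hV.sum_le_one _ _)

lemma thresholdTest_miss_le [Fintype Υ] [DecidableEq Υ] (hp : IsPMF p) (hV : IsChannel V) (a : ℝ)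
    {s : ℝ} (hs : 0 ≤ s) :
    ∑ x, p x * ∑ y ∈ (thresholdTest p V a x)ᶜ, V x y ≤ Real.exp (s * a) * infoMoment p V s := by
  have hpoint (x : Ω) (y : Υ) (hy : y ∈ (thresholdTest p V a x)ᶜ) :
      p x * V x y ≤ Real.exp (s * a) * (p x * V x y * Real.exp (-s * infoDensity p V x y)) := by
    rcases (mul_nonneg (hp.1 x) (hV.1 x y)).eq_or_lt with h0 | hpos
    · simp [← h0]
    have hxy := pos_of_mul_pos_right hpos (hp.1 x)
    have hout := hp.outputDist_pos hV.1 (pos_of_mul_pos_left hpos (hV.1 x y)) hxy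
    have hdensity : infoDensity p V x y ≤ a := by
      rw [infoDensity, Real.log_le_iff_le_exp (div_pos hxy hout), div_le_iff₀ hout]
      simpa [thresholdTest] using hy
    rw [mul_left_comm, ← Real.exp_add]
    exact le_mul_of_one_le_right hpos.le (Real.one_le_exp (by nlinarith))
  simp only [infoMoment, mul_sum]
  refine sum_le_sum fun x _ => (sum_le_sum (hpoint x)).trans ?_
  exact sum_le_sum_of_subset_of_nonneg (subset_univ _) fun y _ _ => mul_nonneg (Real.exp_pos _).le
    (mul_nonneg (mul_nonneg (hp.1 x) (hV.1 x y)) (Real.exp_pos _).le)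

end InfoDensity

section Memoryless

variable {X Y : Type*} {P : X → ℝ} {W : X → Y → ℝ}

lemma isChannel_Wn [Fintype Y] (hW : IsChannel W) (n : ℕ) : IsChannel (Wn W n) :=
  ⟨fun _ _ => prod_nonneg fun _ _ => hW.1 _ _, fun x => by
    simp only [Wn, ← Fintype.prod_sum fun i y => W (x i) y, hW.2, prod_const_one]⟩

variable [Fintype X]

lemma outputDist_iidPMF_Wn (P : X → ℝ) (W : X → Y → ℝ) (n : ℕ) (y : Fin n → Y) :
    outputDist (iidPMF P) (Wn W n) y = ∏ i, outputDist P W (y i) := by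
  simp only [outputDist, iidPMF, Wn, Fintype.prod_sum, prod_mul_distrib]

lemma infoMoment_iidPMF_Wn [Fintype Y] (hP : IsPMF P) (hW : IsChannel W) (n : ℕ) (s : ℝ) :
    infoMoment (iidPMF P) (Wn W n) s = infoMoment P W s ^ n := by
  have hfactor (x : Fin n → X) (y : Fin n → Y) :
      iidPMF P x * Wn W n x y * Real.exp (-s * infoDensity (iidPMF P) (Wn W n) x y) =
        ∏ i, P (x i) * W (x i) (y i) * Real.exp (-s * infoDensity P W (x i) (y i)) := by
    rw [prod_mul_distrib, prod_mul_distrib, ← Real.exp_sum, ← mul_sum]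
    by_cases h0 : iidPMF P x * Wn W n x y = 0
    · rw [h0, zero_mul, ← iidPMF, ← Wn, h0, zero_mul]
    have hpos (i : Fin n) : 0 < P (x i) ∧ 0 < W (x i) (y i) := by
      rw [iidPMF, Wn, ← prod_mul_distrib, ← ne_eq, prod_ne_zero_iff] at h0
      exact ⟨(hP.1 _).lt_of_ne' (left_ne_zero_of_mul (h0 i (mem_univ i))),
        (hW.1 _ _).lt_of_ne' (right_ne_zero_of_mul (h0 i (mem_univ i)))⟩
    simp only [infoDensity]
    rw [outputDist_iidPMF_Wn, Wn, ← prod_div_distrib, Real.log_prod fun i _ =>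
      (div_pos (hpos i).2 (hP.outputDist_pos hW.1 (hpos i).1 (hpos i).2)).ne', iidPMF]
  simp only [infoMoment, hfactor]
  rw [Fintype.sum_pow]
  exact sum_congr rfl fun x _ => (Fintype.prod_sum fun i y =>
    P (x i) * W (x i) y * Real.exp (-s * infoDensity P W (x i) y)).symm

lemma exists_isCodewordTest_Wn [Fintype Y] (hP : IsPMF P) (hW : IsChannel W) {J : ℝ}
    (hJ : J < mutInf P W) :
    ∃ η₀ > 0, ∀ η ≤ η₀, ∀ n : ℕ, ∃ D : (Fin n → X) → Finset (Fin n → Y),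
      IsCodewordTest (iidPMF P) (Wn W n) D (Real.exp (-(n * η))) (Real.exp (-(n * (J + η)))) := by
  obtain ⟨r, hJr, hr⟩ := exists_between hJ
  obtain ⟨s, hs, hlt⟩ := exists_exp_mul_infoMoment_lt_one hP hW hr
  set q := Real.exp (s * r) * infoMoment P W s with hq
  have hq0 : 0 ≤ q := mul_nonneg (Real.exp_pos _).le (infoMoment_nonneg hP hW s)
  have hqexp : q ≤ Real.exp (-(1 - q)) := by linarith [Real.add_one_le_exp (-(1 - q))]
  refine ⟨min (1 - q) (r - J), lt_min (sub_pos.2 hlt) (sub_pos.2 hJr), fun η hη n =>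
    ⟨thresholdTest (iidPMF P) (Wn W n) (n * r), ?_, fun x' => ?_⟩⟩
  · calc ∑ x, iidPMF P x * ∑ y ∈ (thresholdTest (iidPMF P) (Wn W n) (n * r) x)ᶜ, Wn W n x y
        ≤ Real.exp (s * (n * r)) * infoMoment (iidPMF P) (Wn W n) s :=
          thresholdTest_miss_le hP.iidPMF (isChannel_Wn hW n) _ hs.le
      _ = q ^ n := by
          rw [hq, infoMoment_iidPMF_Wn hP hW, mul_pow, ← Real.exp_nat_mul, mul_left_comm]
      _ ≤ Real.exp (-(1 - q)) ^ n := pow_le_pow_left₀ hq0 hqexp n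
      _ = Real.exp (-(n * (1 - q))) := by rw [← Real.exp_nat_mul, mul_neg]
      _ ≤ Real.exp (-(n * η)) := by
          gcongr
          exact hη.trans (min_le_left _ _)
  · refine (thresholdTest_cross_le (isChannel_Wn hW n) _ x').trans ?_
    gcongr
    linarith [hη.trans (min_le_right _ _)]

end Memoryless

section Sizes

/-- The least integer that is at least `exp t`: the size of an alphabet that carries `t` nats. -/
def expCeil (t : ℝ) : ℕ :=
  ⌈Real.exp t⌉₊

lemma exp_le_expCeil (t : ℝ) : Real.exp t ≤ expCeil t :=
  Nat.le_ceil _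

lemma expCeil_le {t : ℝ} (ht : 0 ≤ t) : (expCeil t : ℝ) ≤ 2 * Real.exp t := by
  have hceil := Nat.ceil_lt_add_one (Real.exp_pos t).le
  have hone := Real.one_le_exp ht
  rw [expCeil]
  linarith

instance (t : ℝ) : NeZero (expCeil t) :=
  ⟨(Nat.ceil_pos.2 (Real.exp_pos t)).ne'⟩

lemma four_mul_sq_mul_exp_neg_lt_one {N j h u x : ℝ} (hN : 0 ≤ N) (hj : 0 ≤ j) (hu : 0 ≤ u)
    (hlarge : 22 + 4 * u < Real.exp h) (hNle : N ≤ 16 * Real.exp (2 * Real.exp j + u))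
    (hx : Real.exp (j + h) ≤ x) : 4 * N ^ 2 * Real.exp (-(x / 2)) < 1 := by
  have hj1 : 1 ≤ Real.exp j := Real.one_le_exp hj
  have h1024 : (1024 : ℝ) ≤ Real.exp 7 := by
    have hpow := pow_le_pow_left₀ (by norm_num) Real.exp_one_gt_d9.le 7
    rw [← Real.exp_nat_mul] at hpow
    norm_num at hpow ⊢
    linarith
  calc 4 * N ^ 2 * Real.exp (-(x / 2))
      ≤ 4 * (16 * Real.exp (2 * Real.exp j + u)) ^ 2 * Real.exp (-(x / 2)) := by gcongr
    _ = 1024 * Real.exp (4 * Real.exp j + 2 * u - x / 2) := by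
        rw [mul_pow, ← Real.exp_nat_mul, sub_eq_add_neg, Real.exp_add _ (-(x / 2))]
        push_cast
        ring_nf
    _ ≤ Real.exp 7 * Real.exp (4 * Real.exp j + 2 * u - x / 2) := by gcongr
    _ = Real.exp (7 + (4 * Real.exp j + 2 * u - x / 2)) := (Real.exp_add _ _).symm
    _ < 1 := by
        rw [Real.exp_lt_one_iff]
        rw [Real.exp_add] at hx
        nlinarith

lemma four_le_exp_neg_mul_card {h : ℝ} (hh : 4 ≤ Real.exp h) :
    4 ≤ Real.exp (-h) * Fintype.card (Fin (expCeil (2 * h))) := by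
  rw [Fintype.card_fin]
  calc (4 : ℝ) ≤ Real.exp (-h) * Real.exp (2 * h) := by
        rwa [← Real.exp_add, show -h + 2 * h = h by ring]
    _ ≤ Real.exp (-h) * expCeil (2 * h) := by
        gcongr
        exact exp_le_expCeil _

lemma card_mul_exp_neg_le {j h : ℝ} (hj : 0 ≤ j) (hh0 : 0 ≤ h) (hh : 16 ≤ Real.exp h) :
    Fintype.card (Fin (expCeil (j + 2 * h)) × Fin (expCeil (2 * h))) * Real.exp (-(j + 6 * h)) ≤
      Real.exp (-h) / 4 := by
  have hsmall : 16 * Real.exp (-h) ≤ 1 := by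
    rw [Real.exp_neg, ← div_eq_mul_inv]
    exact (div_le_one (Real.exp_pos h)).2 hh
  rw [Fintype.card_prod, Fintype.card_fin, Fintype.card_fin, Nat.cast_mul]
  calc (expCeil (j + 2 * h) : ℝ) * expCeil (2 * h) * Real.exp (-(j + 6 * h))
      ≤ 2 * Real.exp (j + 2 * h) * (2 * Real.exp (2 * h)) * Real.exp (-(j + 6 * h)) := by
        gcongr <;> exact expCeil_le (by positivity)
    _ = 4 * (Real.exp (j + 2 * h) * Real.exp (2 * h) * Real.exp (-(j + 6 * h))) := by ring
    _ = 4 * (Real.exp (-h) * Real.exp (-h)) := by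
        simp only [← Real.exp_add]
        ring_nf
    _ ≤ Real.exp (-h) / 4 := by nlinarith [Real.exp_pos (-h)]

lemma four_mul_card_sq_mul_exp_neg_lt_one {ℓ ℓ' j j' h : ℝ} (hj : 0 ≤ j) (hj' : 0 ≤ j')
    (hh : 0 ≤ h) (hℓ : ℓ ≤ j) (hℓ' : ℓ' ≤ j) (hlarge : 22 + 4 * (j' + 4 * h) < Real.exp h) :
    4 * (Fintype.card (((Fin (expCeil (Real.exp ℓ)) × Fin (expCeil (Real.exp ℓ'))) ×
      Fin (expCeil (j' + 2 * h))) × Fin (expCeil (2 * h))) : ℝ) ^ 2 *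
      Real.exp (-(Real.exp (-h) * Fintype.card (Fin (expCeil (j + 2 * h))) / 2)) < 1 := by
  refine four_mul_sq_mul_exp_neg_lt_one (Nat.cast_nonneg _) hj (by positivity) hlarge ?_ ?_
  · simp only [Fintype.card_prod, Fintype.card_fin, Nat.cast_mul]
    calc (expCeil (Real.exp ℓ) : ℝ) * expCeil (Real.exp ℓ') * expCeil (j' + 2 * h) *
          expCeil (2 * h)
        ≤ 2 * Real.exp (Real.exp j) * (2 * Real.exp (Real.exp j)) *
          (2 * Real.exp (j' + 2 * h)) * (2 * Real.exp (2 * h)) := by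
          gcongr
          · exact (expCeil_le (Real.exp_pos _).le).trans (by gcongr)
          · exact (expCeil_le (Real.exp_pos _).le).trans (by gcongr)
          · exact expCeil_le (by positivity)
          · exact expCeil_le (by positivity)
      _ = 16 * (Real.exp (Real.exp j) * Real.exp (Real.exp j) * Real.exp (j' + 2 * h) *
          Real.exp (2 * h)) := by ring
      _ = 16 * Real.exp (2 * Real.exp j + (j' + 4 * h)) := by
          simp only [← Real.exp_add]
          ring_nf
  · rw [Fintype.card_fin, show j + h = -h + (j + 2 * h) by ring, Real.exp_add]
    gcongr
    exact exp_le_expCeil _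

lemma exp_le_expCeil_mul (t : ℝ) (k : ℕ) [NeZero k] :
    Real.exp t ≤ (expCeil t * k : ℕ) :=
  (exp_le_expCeil t).trans (Nat.cast_le.2 (Nat.le_mul_of_pos_right _ (Nat.pos_of_neZero k)))

theorem exists_broadcast_isAvgIDCode_of_isCodewordTest {Ω Υ Ζ : Type*} [Fintype Ω] [Fintype Υ]
    [DecidableEq Υ] [Fintype Ζ] [DecidableEq Ζ] {p : Ω → ℝ} {VY : Ω → Υ → ℝ} {VZ : Ω → Ζ → ℝ}
    {DY : Ω → Finset Υ} {DZ : Ω → Finset Ζ} {ℓ ℓY ℓZ jY jZ h : ℝ} (hp : IsPMF p)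
    (hℓ : 0 ≤ ℓ) (hh : 0 ≤ h) (hVY : IsChannel VY)
    (hDY : IsCodewordTest p VY DY (Real.exp (-(6 * h))) (Real.exp (-(jY + 6 * h))))
    (hℓjY : ℓ ≤ jY) (hℓY : ℓY ≤ jY) (hlargeY : 22 + 4 * (jY + 4 * h) < Real.exp h)
    (hVZ : IsChannel VZ)
    (hDZ : IsCodewordTest p VZ DZ (Real.exp (-(6 * h))) (Real.exp (-(jZ + 6 * h))))
    (hℓjZ : ℓ ≤ jZ) (hℓZ : ℓZ ≤ jZ) (hlargeZ : 22 + 4 * (jZ + 4 * h) < Real.exp h) :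
    ∃ (k kY kZ : ℕ) (x : Fin k → Fin kY → Fin kZ → Ω)
      (EY : Fin k × Fin kY → Finset Υ) (EZ : Fin k × Fin kZ → Finset Ζ),
      IsAvgIDCode VY (fun μ mz => x μ.1 μ.2 mz) EY (Real.exp (-h)) (2 * Real.exp (-h)) ∧
      IsAvgIDCode VZ (fun μ my => x μ.1 my μ.2) EZ (Real.exp (-h)) (2 * Real.exp (-h)) ∧
      Real.exp (Real.exp ℓ) ≤ k ∧ Real.exp (Real.exp ℓY) ≤ kY ∧ Real.exp (Real.exp ℓZ) ≤ kZ := by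
  have hjY := hℓ.trans hℓjY
  have hjZ := hℓ.trans hℓjZ
  have hh16 : 16 ≤ Real.exp h := by linarith
  have hmiss : Real.exp (-(6 * h)) ≤ Real.exp (-h) / 4 :=
    calc Real.exp (-(6 * h)) ≤ Real.exp (-h + -h) := Real.exp_le_exp.2 (by linarith)
      _ = Real.exp (-h) / Real.exp h := by rw [Real.exp_add, Real.exp_neg, div_eq_mul_inv]
      _ ≤ Real.exp (-h) / 4 := by
          gcongr
          linarith
  have hB := four_le_exp_neg_mul_card (h := h) (by linarith)
  obtain ⟨x, EY, EZ, hY, hZ⟩ := exists_broadcast_isAvgIDCode hp (Real.exp_pos _).le hB hB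
    hVY (hDY.mono hmiss le_rfl) (card_mul_exp_neg_le hjY hh hh16)
    (four_mul_card_sq_mul_exp_neg_lt_one hjY hjZ hh hℓjY hℓY hlargeZ)
    hVZ (hDZ.mono hmiss le_rfl) (card_mul_exp_neg_le hjZ hh hh16)
    (four_mul_card_sq_mul_exp_neg_lt_one hjZ hjY hh hℓjZ hℓZ hlargeY)
  have hsplit (k kA kB : ℕ) : Function.Injective
      (Prod.map id finProdFinEquiv.symm : Fin k × Fin (kA * kB) → Fin k × Fin kA × Fin kB) :=
    Function.injective_id.prodMap finProdFinEquiv.symm.injective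
  exact ⟨_, _, _, fun m my mz => x m (finProdFinEquiv.symm my) (finProdFinEquiv.symm mz), _, _,
    hY.comp (hsplit _ _ _) finProdFinEquiv.symm, hZ.comp (hsplit _ _ _) finProdFinEquiv.symm,
    exp_le_expCeil _, exp_le_expCeil_mul _ _, exp_le_expCeil_mul _ _⟩

end Sizes

section Asymptotics

lemma eventually_add_natCast_mul_lt_exp (a b : ℝ) {η : ℝ} (hη : 0 < η) :
    ∀ᶠ n : ℕ in Filter.atTop, a + n * b < Real.exp (n * η) := by
  have hlin : Filter.Tendsto (fun n : ℕ => (n : ℝ) * η) Filter.atTop Filter.atTop :=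
    tendsto_natCast_atTop_atTop.atTop_mul_const hη
  filter_upwards [((Real.tendsto_mul_exp_add_div_pow_atTop 1 (-a) 1 one_pos).comp
    hlin).eventually_gt_atTop (b / η), Filter.eventually_gt_atTop 0] with n hgt hn
  have hnη : 0 < n * η := by positivity
  simp only [Function.comp_apply, one_mul, pow_one] at hgt
  rw [div_lt_div_iff₀ hη hnη] at hgt
  nlinarith

lemma le_inv_mul_log_log {n k : ℕ} {r : ℝ} (hn : n ≠ 0) (hk : Real.exp (Real.exp (n * r)) ≤ k) :
    r ≤ (1 / n) * Real.log (Real.log k) := by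
  have hn0 : (0 : ℝ) < n := by positivity
  have hlog : Real.exp (n * r) ≤ Real.log k :=
    (Real.le_log_iff_exp_le ((Real.exp_pos _).trans_le hk)).2 hk
  rw [one_div, ← div_eq_inv_mul, le_div_iff₀' hn0]
  exact (Real.le_log_iff_exp_le ((Real.exp_pos _).trans_le hlog)).2 hlog

theorem exists_broadcast_isAvgIDCode_Wn {X Y Z : Type*} [Fintype X] [Fintype Y] [Fintype Z]
    {P : X → ℝ} {WY : X → Y → ℝ} {WZ : X → Z → ℝ} (hP : IsPMF P) (hWY : IsChannel WY)
    (hWZ : IsChannel WZ) {R RY RZ : ℝ} (hR0 : 0 ≤ R) (hRY : max R RY < mutInf P WY)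
    (hRZ : max R RZ < mutInf P WZ) :
    ∃ τ > 0, ∀ᶠ n : ℕ in Filter.atTop, ∃ (k kY kZ : ℕ) (x : Fin k → Fin kY → Fin kZ → Fin n → X)
      (EY : Fin k × Fin kY → Finset (Fin n → Y)) (EZ : Fin k × Fin kZ → Finset (Fin n → Z)),
      IsAvgIDCode (Wn WY n) (fun μ mz => x μ.1 μ.2 mz) EY
        (Real.exp (-(n * τ))) (Real.exp (-(n * τ))) ∧
      IsAvgIDCode (Wn WZ n) (fun μ my => x μ.1 my μ.2) EZ
        (Real.exp (-(n * τ))) (Real.exp (-(n * τ))) ∧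
      Real.exp (Real.exp (n * R)) ≤ k ∧ Real.exp (Real.exp (n * RY)) ≤ kY ∧
      Real.exp (Real.exp (n * RZ)) ≤ kZ := by
  obtain ⟨ηY, hηY, htestY⟩ := exists_isCodewordTest_Wn hP hWY hRY
  obtain ⟨ηZ, hηZ, htestZ⟩ := exists_isCodewordTest_Wn hP hWZ hRZ
  obtain ⟨η, hη, hηmin⟩ : ∃ η > 0, 6 * η = min ηY ηZ := ⟨min ηY ηZ / 6, by positivity, by ring⟩
  refine ⟨η / 2, half_pos hη, ?_⟩
  filter_upwards [eventually_add_natCast_mul_lt_exp 22 (4 * (max R RY + 4 * η)) hη,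
    eventually_add_natCast_mul_lt_exp 22 (4 * (max R RZ + 4 * η)) hη,
    eventually_add_natCast_mul_lt_exp 2 0 (half_pos hη)] with n hlargeY hlargeZ htwo
  obtain ⟨DY, hDY⟩ := htestY (6 * η) (hηmin.trans_le (min_le_left _ _)) n
  obtain ⟨DZ, hDZ⟩ := htestZ (6 * η) (hηmin.trans_le (min_le_right _ _)) n
  rw [mul_add, mul_left_comm] at hDY hDZ
  rw [mul_left_comm, mul_add, mul_left_comm (n : ℝ) 4] at hlargeY hlargeZ
  obtain ⟨k, kY, kZ, x, EY, EZ, hY, hZ, hk, hkY, hkZ⟩ :=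
    exists_broadcast_isAvgIDCode_of_isCodewordTest (ℓ := n * R) (ℓY := n * RY) (ℓZ := n * RZ)
      hP.iidPMF (by positivity) (by positivity)
      (isChannel_Wn hWY n) hDY (by gcongr; exact le_max_left _ _)
      (by gcongr; exact le_max_right _ _) hlargeY
      (isChannel_Wn hWZ n) hDZ (by gcongr; exact le_max_left _ _)
      (by gcongr; exact le_max_right _ _) hlargeZ
  have hmiss : Real.exp (-(n * η)) ≤ Real.exp (-(n * (η / 2))) :=
    Real.exp_le_exp.2 (by nlinarith [n.cast_nonneg (α := ℝ)])
  have hfalse : 2 * Real.exp (-(n * η)) ≤ Real.exp (-(n * (η / 2))) :=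
    calc 2 * Real.exp (-(n * η)) ≤ Real.exp (n * (η / 2)) * Real.exp (-(n * η)) := by
          gcongr
          linarith
      _ = Real.exp (-(n * (η / 2))) := by
          rw [← Real.exp_add]
          ring_nf
  exact ⟨k, kY, kZ, x, EY, EZ, hY.mono hmiss hfalse, hZ.mono hmiss hfalse, hk, hkY, hkZ⟩

end Asymptotics

section BroadcastCodes

variable {X Y Z : Type*} [Fintype Y] [Fintype Z]

lemma isChannel_margY {W : X → Y → Z → ℝ} (hW : IsBC W) : IsChannel (margY W) :=
  ⟨fun x y => sum_nonneg fun z _ => hW.1 x y z, hW.2⟩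

lemma isChannel_margZ {W : X → Y → Z → ℝ} (hW : IsBC W) : IsChannel (margZ W) :=
  ⟨fun x z => sum_nonneg fun y _ => hW.1 x y z, fun x => sum_comm.trans (hW.2 x)⟩

lemma isPMF_piSingle {Ω : Type*} [Fintype Ω] [DecidableEq Ω] (x₀ : Ω) :
    IsPMF (Pi.single x₀ 1 : Ω → ℝ) :=
  ⟨fun x => by rw [Pi.single_apply]; positivity, by simp⟩

lemma IsAvgIDCode.idCodeErr_piSingle [Fintype X] {M : Type*} {n k : ℕ} {W : X → Y → ℝ}
    {x : M → Fin k → Fin n → X} {D : M → Finset (Fin n → Y)} {l₁ l₂ : ℝ}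
    (hk0 : 0 < k) (h : IsAvgIDCode (Wn W n) x D l₁ l₂) :
    IDCodeErr n W (fun μ x' => (k : ℝ)⁻¹ * ∑ a, (Pi.single (x μ a) 1 : (Fin n → X) → ℝ) x')
      D l₁ l₂ := by
  have hk : (0 : ℝ) < k := by exact_mod_cast hk0
  have hmix (μ : M) (s : Finset (Fin n → Y)) :
      ∑ x', ((k : ℝ)⁻¹ * ∑ a, (Pi.single (x μ a) 1 : (Fin n → X) → ℝ) x') *
          ∑ y ∈ s, Wn W n x' y =
        (k : ℝ)⁻¹ * ∑ a, ∑ y ∈ s, Wn W n (x μ a) y := by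
    simp only [mul_assoc, ← mul_sum, sum_mul]
    rw [sum_comm]
    simp [Pi.single_apply]
  refine ⟨fun μ => ?_, fun μ ν hμν => ?_⟩ <;> rw [hmix, inv_mul_le_iff₀' hk]
  · simpa using h.miss_le μ
  · simpa using h.false_le μ ν hμν

end BroadcastCodes

/-- **Claim 6.** Direct part for the BC with a common message,
with exponentially decaying error probabilities and deterministic encoders. -/
theorem bc_cm_id_direct_part_deterministic
    {X Y Z : Type} [Fintype X] [Fintype Y] [Fintype Z]
    [Nonempty X] [Nonempty Y] [Nonempty Z]
    (W : X → Y → Z → ℝ) (hW : IsBC W)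
    (P : X → ℝ) (hP : IsPMF P)
    (R RY RZ : ℝ)
    (hR0 : 0 < R) (hR : R < min (mutInf P (margY W)) (mutInf P (margZ W)))
    (hRY0 : 0 < RY) (hRY : RY < mutInf P (margY W))
    (hRZ0 : 0 < RZ) (hRZ : RZ < mutInf P (margZ W)) :
    ∃ τ : ℝ, 0 < τ ∧ ∃ n₀ : ℕ, ∀ n : ℕ, n₀ ≤ n →
      ∃ (k kY kZ : ℕ) (Q : Fin k → Fin kY → Fin kZ → (Fin n → X) → ℝ)
        (DY : Fin k → Fin kY → Finset (Fin n → Y))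
        (DZ : Fin k → Fin kZ → Finset (Fin n → Z)),
        IsCMIDCode n k kY kZ W Q DY DZ
          (Real.exp (-(n * τ))) (Real.exp (-(n * τ)))
          (Real.exp (-(n * τ))) (Real.exp (-(n * τ))) ∧
        R ≤ (1 / n) * Real.log (Real.log k) ∧
        RY ≤ (1 / n) * Real.log (Real.log kY) ∧
        RZ ≤ (1 / n) * Real.log (Real.log kZ) ∧
        ∀ m my mz, ∃ x0 : Fin n → X, ∀ x, Q m my mz x = if x = x0 then 1 else 0 := by
  obtain ⟨hRIY, hRIZ⟩ := lt_min_iff.1 hR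
  obtain ⟨τ, hτ, hcodes⟩ := exists_broadcast_isAvgIDCode_Wn hP (isChannel_margY hW)
    (isChannel_margZ hW) hR0.le (max_lt hRIY hRY) (max_lt hRIZ hRZ)
  refine ⟨τ, hτ, Filter.eventually_atTop.1 ?_⟩
  filter_upwards [hcodes, Filter.eventually_ne_atTop 0] with n hcode hn
  obtain ⟨k, kY, kZ, x, EY, EZ, hY, hZ, hk, hkY, hkZ⟩ := hcode
  have hkY0 : 0 < kY := Nat.cast_pos.1 ((Real.exp_pos _).trans_le hkY)
  have hkZ0 : 0 < kZ := Nat.cast_pos.1 ((Real.exp_pos _).trans_le hkZ)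
  exact ⟨k, kY, kZ, fun m my mz => Pi.single (x m my mz) 1, fun m my => EY (m, my),
    fun m mz => EZ (m, mz),
    ⟨fun _ _ _ => isPMF_piSingle _, hY.idCodeErr_piSingle hkZ0, hZ.idCodeErr_piSingle hkY0⟩,
    le_inv_mul_log_log hn hk, le_inv_mul_log_log hn hkY, le_inv_mul_log_log hn hkZ,
    fun m my mz => ⟨x m my mz, fun _ => Pi.single_apply _ _ _⟩⟩
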